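/- For any finite simple graph G of order n with minimum degree δ ≥ φ, where φ = max{k, l−1}, the parametric domination number satisfies γ_{k,l}(G) ≤ ((ln(δ − φ + 1) + ln b_{φ−1} + 1)/(δ − φ + 1)) · n, where b_{φ−1} = C(δ, φ−1). -/

import Mathlib

open Finset Real

/-- The parametric domination number γ_{k,l}: the minimum cardinality of a set D such that
every vertex outside D has at least k members of D in its closed neighbourhood, and every
vertex of D has at least l members of D in its closed neighbourhood. -/
noncomputable def paramDomNum {V : Type*} [Fintype V] [DecidableEq V]
    (G : SimpleGraph V) [DecidableRel G.Adj] (k l : ℕ) : ℕ :=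
  sInf {m : ℕ | ∃ D : Finset V,
    (∀ v, v ∉ D → k ≤ ((insert v (G.neighborFinset v)) ∩ D).card) ∧
    (∀ v, v ∈ D → l ≤ ((insert v (G.neighborFinset v)) ∩ D).card) ∧
    m = D.card}

/-!
Fix for every vertex `v` a set `S v` of `δ` neighbours, and choose a random set `A` of vertices
containing each vertex independently with probability `p`. Adding, for every `v`, `φ - |S v ∩ A|`
further elements of `S v` to `A` gives every vertex at least `φ` neighbours in the resulting set
`D`. As a vertex of `D` also counts itself, `D` is `(k, l)`-dominating. The deficit `φ - |S v ∩ A|`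
is at most the number of `(φ - 1)`-subsets `T` of `S v` such that `A` misses `S v \ T`, and a given
`T` has this property with probability `(1 - p) ^ (δ - φ + 1)`. Hence some outcome gives a
dominating set of size at most `n * (p + b * (1 - p) ^ (δ - φ + 1))`. Since `1 - p ≤ exp (-p)`, the
choice `p = (log (δ - φ + 1) + log b) / (δ - φ + 1)` makes the second summand at most
`1 / (δ - φ + 1)`; when this `p` exceeds `1`, take `p = 1` instead.
-/

section BernoulliWeight

variable {α R : Type*} [Fintype α] [DecidableEq α] [CommRing R]

/-- The probability that a random subset of `α`, containing each element independently with
probability `p`, equals `A`. Expectations are finite sums against this weight, so that no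
measure on `Finset α` is needed. -/
def bernoulliWeight (p : R) (A : Finset α) : R :=
  p ^ #A * (1 - p) ^ #Aᶜ

theorem sum_bernoulliWeight_filter_disjoint (p : R) (U : Finset α) :
    ∑ A with Disjoint A U, bernoulliWeight p A = (1 - p) ^ #U := by
  have hpowerset : ({A | Disjoint A U} : Finset (Finset α)) = Uᶜ.powerset := by
    ext A
    simp [subset_compl_iff_disjoint_right]
  have hweight : ∀ A ∈ Uᶜ.powerset,
      bernoulliWeight p A = (1 - p) ^ #U * (p ^ #A * (1 - p) ^ (#Uᶜ - #A)) := by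
    intro A hA
    have hcompl : #Aᶜ = #U + (#Uᶜ - #A) := by
      have := card_le_card (mem_powerset.mp hA)
      have := card_add_card_compl A
      have := card_add_card_compl U
      omega
    rw [bernoulliWeight, hcompl, pow_add]
    ring
  rw [hpowerset, sum_congr rfl hweight, ← mul_sum, sum_pow_mul_eq_add_pow, add_sub_cancel,
    one_pow, mul_one]

theorem sum_bernoulliWeight (p : R) : ∑ A : Finset α, bernoulliWeight p A = 1 := by
  simpa using sum_bernoulliWeight_filter_disjoint p (∅ : Finset α)

theorem sum_bernoulliWeight_mul_card_filter_disjoint {ι : Type*} (p : R) (s : Finset ι)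
    (U : ι → Finset α) :
    ∑ A, bernoulliWeight p A * #{i ∈ s | Disjoint A (U i)} = ∑ i ∈ s, (1 - p) ^ #(U i) := by
  simp only [← sum_boole, mul_sum, mul_ite, mul_one, mul_zero]
  rw [sum_comm]
  simp only [← sum_filter, sum_bernoulliWeight_filter_disjoint]

theorem sum_bernoulliWeight_mul_card (p : R) :
    ∑ A : Finset α, bernoulliWeight p A * #A = Fintype.card α * p := by
  have hcard (A : Finset α) : (#A : R) = Fintype.card α - #{a | Disjoint A {a}} := by
    have hfilter : ({a | Disjoint A {a}} : Finset α) = Aᶜ := by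
      ext a
      simp
    rw [hfilter, ← card_add_card_compl A, Nat.cast_add, add_sub_cancel_right]
  calc
    ∑ A : Finset α, bernoulliWeight p A * #A
        = ∑ A, bernoulliWeight p A * (Fintype.card α - #{a | Disjoint A {a}}) :=
      sum_congr rfl fun A _ ↦ by rw [hcard A]
    _ = Fintype.card α - ∑ a : α, (1 - p) ^ #{a} := by
      simp only [mul_sub, sum_sub_distrib, ← sum_mul, sum_bernoulliWeight, one_mul,
        sum_bernoulliWeight_mul_card_filter_disjoint]
    _ = Fintype.card α * p := by
      simp only [card_singleton, pow_one, sum_const, card_univ, nsmul_eq_mul]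
      ring

theorem bernoulliWeight_nonneg [PartialOrder R] [IsOrderedRing R] {p : R} (hp₀ : 0 ≤ p)
    (hp₁ : p ≤ 1) (A : Finset α) : 0 ≤ bernoulliWeight p A :=
  mul_nonneg (pow_nonneg hp₀ _) (pow_nonneg (sub_nonneg.mpr hp₁) _)

theorem exists_le_sum_bernoulliWeight_mul [LinearOrder R] [IsOrderedRing R] {p : R} (hp₀ : 0 ≤ p)
    (hp₁ : p ≤ 1) (X : Finset α → R) : ∃ A, X A ≤ ∑ B, bernoulliWeight p B * X B := by
  obtain ⟨A, hA⟩ := Finite.exists_min X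
  refine ⟨A, ?_⟩
  calc
    X A = ∑ B, bernoulliWeight p B * X A := by rw [← sum_mul, sum_bernoulliWeight, one_mul]
    _ ≤ ∑ B, bernoulliWeight p B * X B :=
      sum_le_sum fun B _ ↦ mul_le_mul_of_nonneg_left (hA B) (bernoulliWeight_nonneg hp₀ hp₁ B)

end BernoulliWeight

section MultipleTransversal

variable {α ι : Type*} [DecidableEq α] [Fintype ι]

theorem exists_card_le_forall_le_card_inter (S : ι → Finset α) (f : ι → ℕ)
    (hf : ∀ i, f i ≤ #(S i)) (A : Finset α) :
    ∃ D, #D ≤ #A + ∑ i, (f i - #(S i ∩ A)) ∧ ∀ i, f i ≤ #(S i ∩ D) := by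
  have hB (i : ι) : ∃ B ⊆ S i \ A, #B = f i - #(S i ∩ A) := by
    apply exists_subset_card_eq
    have := card_inter_add_card_sdiff (S i) A
    have := hf i
    omega
  choose B hBS hBcard using hB
  refine ⟨A ∪ univ.biUnion B, ?_, fun i ↦ ?_⟩
  · calc
      #(A ∪ univ.biUnion B) ≤ #A + #(univ.biUnion B) := card_union_le _ _
      _ ≤ #A + ∑ i, #(B i) := by gcongr; exact card_biUnion_le
      _ = #A + ∑ i, (f i - #(S i ∩ A)) := by simp only [hBcard]
  · have hdisj : Disjoint (S i ∩ A) (B i) :=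
      disjoint_sdiff.mono inter_subset_right (hBS i)
    have hsub : S i ∩ A ∪ B i ⊆ S i ∩ (A ∪ univ.biUnion B) := by
      rw [inter_union_distrib_left]
      exact union_subset_union_right
        (subset_inter ((hBS i).trans sdiff_subset) (subset_biUnion_of_mem B (mem_univ i)))
    calc
      f i ≤ #(S i ∩ A) + #(B i) := by rw [hBcard]; omega
      _ = #(S i ∩ A ∪ B i) := (card_union_of_disjoint hdisj).symm
      _ ≤ #(S i ∩ (A ∪ univ.biUnion B)) := card_le_card hsub

theorem tsub_card_inter_le_card_filter_disjoint_sdiff {S : Finset α} {f : ℕ} (hf : f ≤ #S)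
    (A : Finset α) :
    f - #(S ∩ A) ≤ #{T ∈ powersetCard (f - 1) S | Disjoint A (S \ T)} := by
  obtain hle | hlt := le_or_gt f #(S ∩ A)
  · simp [Nat.sub_eq_zero_of_le hle]
  obtain ⟨C, hAC, hCS, hCcard⟩ := exists_subsuperset_card_eq inter_subset_left hlt.le hf
  -- Erasing from `C` any of its elements outside `A` leaves an admissible `T`.
  calc
    f - #(S ∩ A) = #(C \ (S ∩ A)) := by rw [card_sdiff_of_subset hAC, hCcard]
    _ ≤ #{T ∈ powersetCard (f - 1) S | Disjoint A (S \ T)} := by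
      refine card_le_card_of_injOn C.erase (fun x hx ↦ ?_)
        ((erase_injOn C).mono (coe_subset.mpr sdiff_subset))
      obtain ⟨hxC, hxA⟩ := mem_sdiff.mp hx
      have hsub : S ∩ A ⊆ C.erase x := subset_erase.mpr ⟨hAC, hxA⟩
      refine mem_filter.mpr ⟨mem_powersetCard.mpr ⟨(erase_subset x C).trans hCS, ?_⟩, ?_⟩
      · rw [card_erase_of_mem hxC, hCcard]
      · rw [disjoint_right]
        intro y hy hyA
        obtain ⟨hyS, hyC⟩ := mem_sdiff.mp hy
        exact hyC (hsub (mem_inter.mpr ⟨hyS, hyA⟩))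

theorem sum_powersetCard_pow_card_sdiff {R : Type*} [Semiring R] (q : R) (S : Finset α) (j : ℕ) :
    ∑ T ∈ powersetCard j S, q ^ #(S \ T) = (#S).choose j * q ^ (#S - j) := by
  have hcard : ∀ T ∈ powersetCard j S, q ^ #(S \ T) = q ^ (#S - j) := by
    intro T hT
    obtain ⟨hTS, hTcard⟩ := mem_powersetCard.mp hT
    rw [card_sdiff_of_subset hTS, hTcard]
  rw [sum_congr rfl hcard, sum_const, card_powersetCard, nsmul_eq_mul]

theorem exists_card_le_forall_le_card_inter_of_uniform {R : Type*} [Fintype α] [CommRing R]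
    [LinearOrder R] [IsOrderedRing R] {S : ι → Finset α} {d f : ℕ} (hS : ∀ i, #(S i) = d)
    (hfd : f ≤ d) {p : R} (hp₀ : 0 ≤ p) (hp₁ : p ≤ 1) :
    ∃ D, (#D : R) ≤ Fintype.card α * p +
        Fintype.card ι * (d.choose (f - 1) * (1 - p) ^ (d - (f - 1))) ∧
      ∀ i, f ≤ #(S i ∩ D) := by
  have hfS (i : ι) : f ≤ #(S i) := by rwa [hS i]
  let X (A : Finset α) : ℕ :=
    #A + ∑ i, #{T ∈ powersetCard (f - 1) (S i) | Disjoint A (S i \ T)}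
  obtain ⟨A, hA⟩ := exists_le_sum_bernoulliWeight_mul hp₀ hp₁ fun A ↦ (X A : R)
  obtain ⟨D, hDcard, hD⟩ := exists_card_le_forall_le_card_inter S (fun _ ↦ f) hfS A
  have hDX : #D ≤ X A := by
    refine hDcard.trans (Nat.add_le_add_left (sum_le_sum fun i _ ↦ ?_) _)
    exact tsub_card_inter_le_card_filter_disjoint_sdiff (hfS i) A
  refine ⟨D, ?_, hD⟩
  calc
    (#D : R) ≤ X A := Nat.mono_cast hDX
    _ ≤ ∑ A, bernoulliWeight p A * X A := hA
    _ = Fintype.card α * p + ∑ i, ∑ T ∈ powersetCard (f - 1) (S i), (1 - p) ^ #(S i \ T) := by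
      simp only [X, Nat.cast_add, Nat.cast_sum, mul_add, sum_add_distrib, mul_sum,
        sum_bernoulliWeight_mul_card]
      rw [sum_comm]
      simp only [sum_bernoulliWeight_mul_card_filter_disjoint]
    _ = Fintype.card α * p +
        Fintype.card ι * (d.choose (f - 1) * (1 - p) ^ (d - (f - 1))) := by
      simp only [sum_powersetCard_pow_card_sdiff, hS, sum_const, card_univ, nsmul_eq_mul]

end MultipleTransversal

section ParamDomination

variable {V : Type*} [Fintype V] [DecidableEq V] {G : SimpleGraph V} [DecidableRel G.Adj]
  {k l f : ℕ}

theorem paramDomNum_le_card (hk : k ≤ f) (hl : l ≤ f + 1) {D : Finset V}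
    (hD : ∀ v, f ≤ #(G.neighborFinset v ∩ D)) : paramDomNum G k l ≤ #D := by
  refine Nat.sInf_le ⟨D, fun v _ ↦ ?_, fun v hv ↦ ?_, rfl⟩
  · calc
      k ≤ #(G.neighborFinset v ∩ D) := hk.trans (hD v)
      _ ≤ #(insert v (G.neighborFinset v) ∩ D) := by gcongr; exact subset_insert _ _
  · calc
      l ≤ #(G.neighborFinset v ∩ D) + 1 := hl.trans (Nat.succ_le_succ (hD v))
      _ = #(insert v (G.neighborFinset v) ∩ D) := by
        rw [insert_inter_of_mem hv, card_insert_of_notMem (by simp)]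

theorem paramDomNum_le_of_le_minDegree {R : Type*} [CommRing R] [LinearOrder R] [IsOrderedRing R]
    (hk : k ≤ f) (hl : l ≤ f + 1) {d : ℕ} (hfd : f ≤ d) (hd : d ≤ G.minDegree) {p : R}
    (hp₀ : 0 ≤ p) (hp₁ : p ≤ 1) :
    (paramDomNum G k l : R) ≤
      (p + d.choose (f - 1) * (1 - p) ^ (d - (f - 1))) * Fintype.card V := by
  have hS (v : V) : ∃ S ⊆ G.neighborFinset v, #S = d :=
    exists_subset_card_eq (by simpa using hd.trans (G.minDegree_le_degree v))
  choose S hSG hScard using hS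
  obtain ⟨D, hDcard, hD⟩ := exists_card_le_forall_le_card_inter_of_uniform hScard hfd hp₀ hp₁
  have hDG (v : V) : f ≤ #(G.neighborFinset v ∩ D) :=
    (hD v).trans (card_le_card (inter_subset_inter_right (hSG v)))
  calc
    (paramDomNum G k l : R) ≤ #D := Nat.mono_cast (paramDomNum_le_card hk hl hDG)
    _ ≤ Fintype.card V * p +
        Fintype.card V * (d.choose (f - 1) * (1 - p) ^ (d - (f - 1))) := hDcard
    _ = (p + d.choose (f - 1) * (1 - p) ^ (d - (f - 1))) * Fintype.card V := by ring

end ParamDomination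

theorem exists_add_mul_one_sub_pow_le_log_add_one_div {m : ℕ} {b : ℝ} (hmb : 1 ≤ m * b) :
    ∃ p : ℝ, 0 ≤ p ∧ p ≤ 1 ∧ p + b * (1 - p) ^ m ≤ (log (m * b) + 1) / m := by
  have hm : (0 : ℝ) < m := Nat.cast_pos.mpr (Nat.pos_of_ne_zero (by rintro rfl; norm_num at hmb))
  have hb : 0 < b := pos_of_mul_pos_right (one_pos.trans_le hmb) hm.le
  have hlog : 0 ≤ log (m * b) := log_nonneg hmb
  obtain hle | hlt := le_or_gt (log (m * b)) m
  · refine ⟨log (m * b) / m, by positivity, (div_le_one hm).mpr hle, ?_⟩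
    calc
      log (m * b) / m + b * (1 - log (m * b) / m) ^ m
          ≤ log (m * b) / m + b * exp (-log (m * b)) := by
        gcongr
        exact one_sub_div_pow_le_exp_neg hle
      _ = (log (m * b) + 1) / m := by
        rw [exp_neg, exp_log (by positivity)]
        field_simp
  · refine ⟨1, zero_le_one, le_rfl, ?_⟩
    rw [sub_self, zero_pow (Nat.cast_pos.mp hm).ne', mul_zero, add_zero, le_div_iff₀ hm]
    linarith

theorem param_domination_log_bound
    {V : Type*} [Fintype V] [DecidableEq V]
    (G : SimpleGraph V) [DecidableRel G.Adj]
    (n : ℕ) (hn : n = Fintype.card V)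
    (δ : ℕ) (hδ : δ = G.minDegree)
    (k l : ℕ) (hk : 1 ≤ k) (hl : 1 ≤ l)
    (φ : ℕ) (hφ : φ = max k (l - 1))
    (hφδ : φ ≤ δ)
    (b : ℝ) (hb : b = (δ.choose (φ - 1) : ℕ)) :
    (paramDomNum G k l : ℝ) ≤
      ((Real.log ((δ : ℝ) - φ + 1) + Real.log b + 1) / ((δ : ℝ) - φ + 1)) * n := by
  have hφ₁ : 1 ≤ φ := by omega
  have hcast : (δ : ℝ) - φ + 1 = (δ - (φ - 1) : ℕ) := by
    rw [Nat.cast_sub (by omega), Nat.cast_sub hφ₁]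
    ring
  have hm : (1 : ℝ) ≤ (δ - (φ - 1) : ℕ) := Nat.one_le_cast.mpr (by omega)
  have hb₁ : 1 ≤ b := by
    rw [hb]
    exact Nat.one_le_cast.mpr (Nat.choose_pos (by omega))
  obtain ⟨p, hp₀, hp₁, hp⟩ :=
    exists_add_mul_one_sub_pow_le_log_add_one_div (one_le_mul_of_one_le_of_one_le hm hb₁)
  calc
    (paramDomNum G k l : ℝ) ≤ (p + b * (1 - p) ^ (δ - (φ - 1))) * n := by
      rw [hb, hn]
      exact paramDomNum_le_of_le_minDegree (by omega) (by omega) hφδ hδ.le hp₀ hp₁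
    _ ≤ (log ((δ - (φ - 1) : ℕ) * b) + 1) / (δ - (φ - 1) : ℕ) * n := by gcongr
    _ = (log ((δ : ℝ) - φ + 1) + log b + 1) / ((δ : ℝ) - φ + 1) * n := by
      rw [hcast, log_mul (by positivity) (by positivity)]
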